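/- arXiv:2307.08661 — 2 statements merged into one kernel-verified Lean document; each statement's English description precedes it below -/
import Mathlib

section
/- A digraph is 1-extremal if and only if it is a directed cycle. -/
/-!
A directed cycle is easily seen to be 1-extremal: every vertex has a single out-arc, so two
dipaths with the same ends share their first arc, and giving one vertex a colour of its own
destroys the only directed cycle.

Conversely, strong connectivity, 2-connectivity of the underlying graph and `λ = 1` together force
a directed cycle. The point is that every vertex `u` has a unique out-neighbour (`outNeighbour_unique`). If `v ≠ w` are out-neighbours of
`u`, the sets `R v` and `R w` of vertices reachable from them after deleting `u` are disjoint,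
because a common vertex would yield two arc-disjoint dipaths out of `u` with the same end
(`two_le_of_meet`). By strong connectivity the sets `R v`, for `v` an out-neighbour of `u`, cover
all vertices other than `u`, and no arc joins two of them; so deleting `u` disconnects the
underlying graph. A strongly connected digraph in which every out-degree is one is a single orbit
of the successor map, which is the required cycle.
-/

def GoodColouring {V : Type} (A : V → V → Prop) {k : ℕ} (φ : V → Fin k) : Prop :=
  ∀ c : Fin k, ∀ v : V, φ v = c →
    ¬ Relation.TransGen (fun a b => A a b ∧ φ a = c ∧ φ b = c) v v

noncomputable def dichrom {V : Type} (A : V → V → Prop) : ℕ :=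
  sInf {k : ℕ | ∃ φ : V → Fin k, GoodColouring A φ}

def IsDipathList {V : Type} (A : V → V → Prop) (u v : V) (l : List V) : Prop :=
  l.Nodup ∧ List.Chain' A l ∧ l.head? = some u ∧ l.getLast? = some v

noncomputable def localArcConn {V : Type} (A : V → V → Prop) (u v : V) : ℕ :=
  sSup {n : ℕ | ∃ P : Fin n → List V, (∀ i, IsDipathList A u v (P i)) ∧
    ∀ i j, i ≠ j → ∀ p : V × V, p ∈ (P i).zip (P i).tail → p ∉ (P j).zip (P j).tail}

noncomputable def maxLocalArcConn {V : Type} (A : V → V → Prop) : ℕ :=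
  sSup {n : ℕ | ∃ u v : V, u ≠ v ∧ n = localArcConn A u v}

def StronglyConnected {V : Type} (A : V → V → Prop) : Prop :=
  ∀ u v : V, Relation.ReflTransGen A u v

def UnderlyingConnected {V : Type} (A : V → V → Prop) : Prop :=
  Nonempty V ∧ ∀ u v : V, Relation.ReflTransGen (fun a b => A a b ∨ A b a) u v

def UnderlyingTwoConnected {V : Type} (A : V → V → Prop) : Prop :=
  UnderlyingConnected A ∧
    ∀ x : V, UnderlyingConnected (fun a b : {v : V // v ≠ x} => A a.1 b.1)

def IsExtremal {V : Type} (A : V → V → Prop) (k : ℕ) : Prop :=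
  StronglyConnected A ∧ UnderlyingTwoConnected A ∧
    dichrom A = k + 1 ∧ maxLocalArcConn A = k

def IsDirectedCycleDigraph {V : Type} (A : V → V → Prop) : Prop :=
  ∃ n : ℕ, 2 ≤ n ∧ ∃ e : V ≃ ZMod n, ∀ v w : V, A v w ↔ e w = e v + 1

/-! ### Dipaths and arc-connectivity -/

theorem exists_dipathList {V : Type} {r : V → V → Prop} {a b : V}
    (h : Relation.ReflTransGen r a b) : ∃ l, IsDipathList r a b l := by
  classical
  induction h using Relation.ReflTransGen.head_induction_on with
  | refl => exact ⟨[b], List.nodup_singleton b, List.isChain_singleton b, rfl, rfl⟩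
  | head hac _ ih =>
    rename_i a c _
    obtain ⟨l, hnd, hch, hhd, hlast⟩ := ih
    by_cases ha : a ∈ l
    · -- the path already visits `a`: its final segment from `a` on is the required path
      obtain ⟨l₁, l₂, rfl⟩ := List.append_of_mem ha
      refine ⟨a :: l₂, (List.nodup_append.1 hnd).2.1, (List.isChain_append.1 hch).2.1, rfl, ?_⟩
      rw [List.getLast?_append] at hlast
      simpa using hlast
    · obtain _ | ⟨d, l'⟩ := l
      · simp at hhd
      · obtain rfl : d = c := by simpa using hhd
        exact ⟨a :: d :: l', List.nodup_cons.2 ⟨ha, hnd⟩, List.isChain_cons_cons.2 ⟨hac, hch⟩, rfl,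
          by simpa using hlast⟩

theorem rel_of_mem_zip_tail {V : Type} {r : V → V → Prop} {l : List V} (hl : List.IsChain r l)
    {p : V × V} (hp : p ∈ l.zip l.tail) : r p.1 p.2 := by
  induction l with
  | nil => simp at hp
  | cons a l ih =>
    obtain _ | ⟨b, l⟩ := l
    · simp at hp
    · rw [List.isChain_cons_cons] at hl
      simp only [List.tail_cons, List.zip_cons_cons, List.mem_cons] at hp
      rcases hp with rfl | hp
      · exact hl.1
      · exact ih hl.2 hp

theorem exists_first_arc {V : Type} {A : V → V → Prop} {u v : V} (huv : u ≠ v) {l : List V}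
    (h : IsDipathList A u v l) : ∃ b, A u b ∧ (u, b) ∈ l.zip l.tail := by
  obtain ⟨_, hch, hhd, hlast⟩ := h
  obtain _ | ⟨a, _ | ⟨b, l⟩⟩ := l
  · simp at hhd
  · simp at hhd hlast
    exact absurd (hhd.symm.trans hlast) huv
  · obtain rfl : a = u := by simpa using hhd
    exact ⟨b, (List.isChain_cons_cons.1 hch).1, by simp⟩

/-- The set of which `localArcConn A u v` is the supremum is bounded when `u ≠ v`, since
arc-disjoint dipaths from `u` to `v` have distinct first arcs. Hence the supremum is a genuine
maximum rather than the default value `0`. -/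
theorem bddAbove_localArcConn {V : Type} [Fintype V] (A : V → V → Prop) {u v : V} (huv : u ≠ v) :
    BddAbove {n : ℕ | ∃ P : Fin n → List V, (∀ i, IsDipathList A u v (P i)) ∧
      ∀ i j, i ≠ j → ∀ p : V × V, p ∈ (P i).zip (P i).tail → p ∉ (P j).zip (P j).tail} := by
  refine ⟨Fintype.card V, ?_⟩
  rintro n ⟨P, hP, hdis⟩
  choose f _ hf using fun i => exists_first_arc huv (hP i)
  have hinj : Function.Injective f := by
    intro i j hij
    by_contra hne
    exact hdis i j hne _ (hf i) (hij ▸ hf j)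
  simpa using Fintype.card_le_of_injective f hinj

theorem localArcConn_le_max {V : Type} [Fintype V] (A : V → V → Prop) {u v : V} (huv : u ≠ v) :
    localArcConn A u v ≤ maxLocalArcConn A := by
  refine le_csSup ?_ ⟨u, v, huv, rfl⟩
  refine Set.Finite.bddAbove
    ((Set.finite_range fun p : V × V => localArcConn A p.1 p.2).subset ?_)
  rintro n ⟨a, b, _, rfl⟩
  exact ⟨(a, b), rfl⟩

/-- If `t` is reachable from `u` inside each of two disjoint sets of arcs, then there are two
arc-disjoint dipaths from `u` to `t`. -/
theorem two_le_maxLocalArcConn {V : Type} [Fintype V] {A r₁ r₂ : V → V → Prop}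
    (h₁ : ∀ a b, r₁ a b → A a b) (h₂ : ∀ a b, r₂ a b → A a b)
    (hdis : ∀ a b, r₁ a b → ¬ r₂ a b) {u t : V} (hut : u ≠ t)
    (p₁ : Relation.ReflTransGen r₁ u t) (p₂ : Relation.ReflTransGen r₂ u t) :
    2 ≤ maxLocalArcConn A := by
  obtain ⟨l₁, hl₁⟩ := exists_dipathList p₁
  obtain ⟨l₂, hl₂⟩ := exists_dipathList p₂
  refine le_trans ?_ (localArcConn_le_max A hut)
  refine le_csSup (bddAbove_localArcConn A hut) ⟨![l₁, l₂], ?_, ?_⟩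
  · intro i
    fin_cases i
    · exact ⟨hl₁.1, List.IsChain.imp h₁ hl₁.2.1, hl₁.2.2⟩
    · exact ⟨hl₂.1, List.IsChain.imp h₂ hl₂.2.1, hl₂.2.2⟩
  · intro i j hij p hi hj
    fin_cases i <;> fin_cases j
    · exact hij rfl
    · exact hdis _ _ (rel_of_mem_zip_tail hl₁.2.1 hi) (rel_of_mem_zip_tail hl₂.2.1 hj)
    · exact hdis _ _ (rel_of_mem_zip_tail hl₁.2.1 hj) (rel_of_mem_zip_tail hl₂.2.1 hi)
    · exact hij rfl

/-! ### Extremal digraphs have out-degree one -/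

/-- `AvoidReach A u a b`: there is a walk from `a` to `b` in `A` none of whose vertices, except
possibly `a`, is `u`. For `a ≠ u` this is reachability in the digraph with `u` deleted. -/
def AvoidReach {V : Type} (A : V → V → Prop) (u : V) : V → V → Prop :=
  Relation.ReflTransGen (fun a b => A a b ∧ b ≠ u)

theorem AvoidReach.ne {V : Type} {A : V → V → Prop} {u a b : V} (h : AvoidReach A u a b)
    (ha : a ≠ u) : b ≠ u := by
  induction h with
  | refl => exact ha
  | tail _ h _ => exact h.2

/-- Two walks starting with distinct arcs out of `u` and never returning to `u` can meet only if
`λ ≥ 2`: with `S` the set of vertices reachable from `w`, the first vertex `t` of `S` on the walk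
from `v` is the end of one path using arcs with tail outside `S` and of another using arcs with
tail in `S`. -/
theorem two_le_of_meet {V : Type} [Fintype V] {A : V → V → Prop} (hirr : Irreflexive A)
    {u v w z : V} (hv : A u v) (hw : A u w) (hvw : v ≠ w)
    (hvz : AvoidReach A u v z) (hwz : AvoidReach A u w z) : 2 ≤ maxLocalArcConn A := by
  have hvu : v ≠ u := by rintro rfl; exact hirr _ hv
  have hwu : w ≠ u := by rintro rfl; exact hirr _ hw
  have hSu : ¬ AvoidReach A u w u := fun h => h.ne hwu rfl
  have key : ∃ t, AvoidReach A u w t ∧ Relation.ReflTransGen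
      (fun a b => A a b ∧ a ≠ u ∧ ¬ AvoidReach A u w a) v t := by
    revert hvu
    clear hvw hv
    induction hvz using Relation.ReflTransGen.head_induction_on with
    | refl => exact fun _ => ⟨z, hwz, .refl⟩
    | head hac _ ih =>
      rename_i a c _
      intro hau
      by_cases ha : AvoidReach A u w a
      · exact ⟨a, ha, .refl⟩
      · obtain ⟨t, ht, hp⟩ := ih hac.2
        exact ⟨t, ht, .head ⟨hac.1, hau, ha⟩ hp⟩
  obtain ⟨t, ht, hp⟩ := key
  refine two_le_maxLocalArcConn
    (r₁ := fun a b => A a b ∧ (a = u ∧ b = v ∨ a ≠ u ∧ ¬ AvoidReach A u w a))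
    (r₂ := fun a b => A a b ∧ (a = u ∧ b = w ∨ AvoidReach A u w a))
    (fun _ _ h => h.1) (fun _ _ h => h.1) ?_ (ht.ne hwu).symm ?_ ?_
  · rintro a b ⟨_, ⟨rfl, rfl⟩ | ⟨hau, haS⟩⟩ ⟨_, ⟨h, h'⟩ | h⟩
    · exact hvw h'
    · exact hSu h
    · exact hau h
    · exact haS h
  · exact .head ⟨hv, .inl ⟨rfl, rfl⟩⟩
      (Relation.ReflTransGen.mono (fun _ _ h => ⟨h.1, .inr h.2⟩) _ _ hp)
  · refine .head ⟨hw, .inl ⟨rfl, rfl⟩⟩ ?_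
    clear hp
    induction ht with
    | refl => exact .refl
    | tail h hbc ih => exact ih.tail ⟨hbc.1, .inr h⟩

theorem exists_avoidReach {V : Type} {A : V → V → Prop} {u a : V}
    (h : Relation.ReflTransGen A u a) (hau : a ≠ u) : ∃ v, A u v ∧ AvoidReach A u v a := by
  induction h with
  | refl => exact absurd rfl hau
  | tail _ hbc ih =>
    rename_i b c _
    by_cases hb : b = u
    · exact ⟨c, hb ▸ hbc, .refl⟩
    · obtain ⟨v, hv, hr⟩ := ih hb
      exact ⟨v, hv, hr.tail ⟨hbc, hau⟩⟩

/-- Were `v ≠ w` two out-neighbours of `u`, the set reachable from `w` after deleting `u` would be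
a union of components of the underlying graph, contain `w` and miss `v`. -/
theorem outNeighbour_unique {V : Type} [Fintype V] {A : V → V → Prop} (hirr : Irreflexive A)
    (hstr : StronglyConnected A) (h2 : UnderlyingTwoConnected A) (hmax : maxLocalArcConn A = 1)
    {u v w : V} (hv : A u v) (hw : A u w) : v = w := by
  by_contra hvw
  have hvu : v ≠ u := by rintro rfl; exact hirr _ hv
  have hwu : w ≠ u := by rintro rfl; exact hirr _ hw
  have hmeet : ∀ v', A u v' → v' ≠ w → ∀ z, AvoidReach A u v' z → ¬ AvoidReach A u w z := by
    intro v' hv' hne z h₁ h₂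
    have := two_le_of_meet hirr hv' hw hne h₁ h₂
    omega
  have hall : ∀ a : {x : V // x ≠ u}, Relation.ReflTransGen
      (fun a b : {x : V // x ≠ u} => A a.1 b.1 ∨ A b.1 a.1) ⟨w, hwu⟩ a → AvoidReach A u w a.1 := by
    intro a h
    induction h with
    | refl => exact .refl
    | tail _ hbc ih =>
      rename_i b c _
      rcases hbc with hbc | hcb
      · exact Relation.ReflTransGen.tail ih ⟨hbc, c.2⟩
      · obtain ⟨v', hv', hr⟩ := exists_avoidReach (hstr u c.1) c.2
        by_cases hv'w : v' = w
        · exact hv'w ▸ hr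
        · exact absurd ih (hmeet v' hv' hv'w _ (hr.tail ⟨hcb, b.2⟩))
  exact hmeet v hv hvw v .refl (hall ⟨v, hvu⟩ ((h2.2 u).2 _ _))

theorem isDirectedCycle_of_isExtremal {V : Type} [Fintype V] {A : V → V → Prop}
    (hirr : Irreflexive A) (h : IsExtremal A 1) : IsDirectedCycleDigraph A := by
  obtain ⟨hstr, h2, -, hmax⟩ := h
  -- the supremum of the empty set is `0`, so `λ = 1` provides two distinct vertices
  have hne : ∃ u v : V, u ≠ v := by
    by_contra! hno
    have : {n : ℕ | ∃ u v : V, u ≠ v ∧ n = localArcConn A u v} = ∅ := by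
      ext n
      simp only [Set.mem_ofPred_eq, Set.mem_empty_iff_false, iff_false]
      rintro ⟨u, v, huv, -⟩
      exact huv (hno u v)
    rw [maxLocalArcConn, this] at hmax
    simp at hmax
  have hout : ∀ a, ∃ b, A a b := by
    intro a
    obtain ⟨b, hba⟩ : ∃ b, b ≠ a := by
      obtain ⟨u, v, huv⟩ := hne
      by_cases hu : u = a
      · exact ⟨v, fun hv => huv (hu.trans hv.symm)⟩
      · exact ⟨u, hu⟩
    obtain ⟨c, hc, -⟩ := exists_avoidReach (hstr a b) hba
    exact ⟨c, hc⟩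
  choose s hs using hout
  have hA : ∀ v w, A v w ↔ w = s v := fun v w =>
    ⟨fun h => outNeighbour_unique hirr hstr h2 hmax h (hs v), fun h => h ▸ hs v⟩
  obtain ⟨v₀, -, -⟩ := hne
  have hreach : ∀ a b, Relation.ReflTransGen A a b → ∃ k, s^[k] a = b := by
    intro a b h
    induction h with
    | refl => exact ⟨0, rfl⟩
    | tail _ hbc ih =>
      obtain ⟨k, rfl⟩ := ih
      exact ⟨k + 1, by rw [Function.iterate_succ_apply', (hA _ _).1 hbc]⟩
  have hper : v₀ ∈ Function.periodicPts s := by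
    obtain ⟨k, hk⟩ := hreach (s v₀) v₀ (hstr _ _)
    exact ⟨k + 1, k.succ_pos, hk⟩
  set n := Function.minimalPeriod s v₀ with hn
  have hn0 : 0 < n := Function.minimalPeriod_pos_of_mem_periodicPts hper
  have hn1 : n ≠ 1 := by
    intro h1
    have : Function.IsFixedPt s v₀ := Function.minimalPeriod_eq_one_iff_isFixedPt.1 h1
    have h' := hs v₀
    rw [this] at h'
    exact hirr _ h'
  have : NeZero n := ⟨hn0.ne'⟩
  have hbij : Function.Bijective (fun i : ZMod n => s^[i.val] v₀) := by
    constructor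
    · intro i j hij
      exact ZMod.val_injective n
        (Function.iterate_injOn_Iio_minimalPeriod (ZMod.val_lt i) (ZMod.val_lt j) hij)
    · intro x
      obtain ⟨k, rfl⟩ := hreach v₀ x (hstr _ _)
      refine ⟨(k : ZMod n), ?_⟩
      simp only [ZMod.val_natCast]
      exact Function.iterate_mod_minimalPeriod_eq
  have hsucc : ∀ i : ZMod n, s^[(i + 1).val] v₀ = s (s^[i.val] v₀) := by
    intro i
    have hi : (i + 1).val = (i.val + 1) % n := by
      rw [← ZMod.val_natCast]; simp
    rw [hi, ← Function.iterate_succ_apply' s]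
    exact Function.iterate_mod_minimalPeriod_eq
  refine ⟨n, by omega, (Equiv.ofBijective _ hbij).symm, fun v w => ?_⟩
  rw [hA, Equiv.symm_apply_eq, Equiv.ofBijective_apply, hsucc]
  rw [show s^[((Equiv.ofBijective _ hbij).symm v).val] v₀ = v from
    (Equiv.ofBijective _ hbij).apply_symm_apply v]

/-! ### Directed cycles are extremal -/

theorem stronglyConnected_of_cycle {V : Type} {A : V → V → Prop} {n : ℕ} [NeZero n]
    (e : V ≃ ZMod n) (hA : ∀ v w, A v w ↔ e w = e v + 1) : StronglyConnected A := by
  have h : ∀ (k : ℕ) (u v : V), e v = e u + k → Relation.ReflTransGen A u v := by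
    intro k
    induction k with
    | zero =>
      intro u v h
      obtain rfl : v = u := e.injective (by simpa using h)
      exact .refl
    | succ k ih =>
      intro u v h
      refine (ih u (e.symm (e u + k)) (by simp)).tail ?_
      rw [hA, h]
      push_cast
      simp [add_assoc]
  intro u v
  exact h (e v - e u).val u v (by simp)

/-- Deleting `x` from a directed cycle leaves a directed path that starts at the successor
of `x`. -/
theorem twoConnected_of_cycle {V : Type} {A : V → V → Prop} {n : ℕ} [NeZero n] (hn : 2 ≤ n)
    (e : V ≃ ZMod n) (hA : ∀ v w, A v w ↔ e w = e v + 1) : UnderlyingTwoConnected A := by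
  have hcast : ∀ k : ℕ, k + 1 < n → ((k + 1 : ℕ) : ZMod n) ≠ 0 := by
    intro k hk h0
    rw [ZMod.natCast_eq_zero_iff] at h0
    exact absurd (Nat.le_of_dvd k.succ_pos h0) (by omega)
  refine ⟨⟨⟨e.symm 0⟩, fun u v =>
    Relation.ReflTransGen.mono (fun _ _ h => .inl h) _ _ (stronglyConnected_of_cycle e hA u v)⟩,
    fun x => ?_⟩
  have hne : ∀ (k : ℕ), k + 1 < n → e.symm (e x + (k + 1 : ℕ)) ≠ x := by
    intro k hk h
    rw [Equiv.symm_apply_eq] at h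
    exact hcast k hk (by simpa using h)
  let p : {v : V // v ≠ x} := ⟨e.symm (e x + (0 + 1 : ℕ)), hne 0 (by omega)⟩
  have hp : ∀ k : ℕ, k + 1 < n → ∀ a : {v : V // v ≠ x}, e a.1 = e x + (k + 1 : ℕ) →
      Relation.ReflTransGen (fun a b : {v : V // v ≠ x} => A a.1 b.1 ∨ A b.1 a.1) p a := by
    intro k
    induction k with
    | zero =>
      intro _ a ha
      obtain rfl : a = p := Subtype.ext (e.injective (by simpa [p] using ha))
      exact .refl
    | succ k ih =>
      intro hk a ha
      refine (ih (by omega) ⟨_, hne k (by omega)⟩ (by simp)).tail (.inl ?_)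
      rw [hA, ha]
      push_cast
      simp [add_assoc]
  have hall : ∀ a : {v : V // v ≠ x},
      Relation.ReflTransGen (fun a b : {v : V // v ≠ x} => A a.1 b.1 ∨ A b.1 a.1) p a := by
    intro a
    have hlt := ZMod.val_lt (e a.1 - e x)
    have hval : (e a.1 - e x).val ≠ 0 := by
      rw [ne_eq, ZMod.val_eq_zero, sub_eq_zero]
      exact fun h => a.2 (e.injective h)
    obtain ⟨k, hk⟩ := Nat.exists_eq_succ_of_ne_zero hval
    refine hp k (by omega) a ?_
    rw [← Nat.succ_eq_add_one, ← hk]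
    simp
  refine ⟨⟨p⟩, fun a b => Relation.ReflTransGen.trans ?_ (hall b)⟩
  have : Std.Symm (fun a b : {v : V // v ≠ x} => A a.1 b.1 ∨ A b.1 a.1) :=
    ⟨fun _ _ h => h.symm⟩
  exact Relation.ReflTransGen.stdSymm.symm _ _ (hall a)

theorem dichrom_of_cycle {V : Type} {A : V → V → Prop} {n : ℕ} [NeZero n] (hn : 2 ≤ n)
    (e : V ≃ ZMod n) (hA : ∀ v w, A v w ↔ e w = e v + 1) : dichrom A = 2 := by
  classical
  have : Fact (1 < n) := ⟨hn⟩
  have h2 : (2 : ℕ) ∈ {k : ℕ | ∃ φ : V → Fin k, GoodColouring A φ} := by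
    refine ⟨fun v => if e v = 0 then 0 else 1, fun c v _ h => ?_⟩
    -- along a monochromatic arc the representative of `e` in `[0, n)` strictly increases
    have hlt : ∀ a b, Relation.TransGen (fun a b => A a b ∧
        (if e a = 0 then (0 : Fin 2) else 1) = c ∧ (if e b = 0 then (0 : Fin 2) else 1) = c) a b →
        (e a).val < (e b).val := by
      have hstep : ∀ a b, (A a b ∧ (if e a = 0 then (0 : Fin 2) else 1) = c ∧
          (if e b = 0 then (0 : Fin 2) else 1) = c) → (e a).val < (e b).val := by
        rintro a b ⟨hab, ha, hb⟩
        rw [hA] at hab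
        by_cases hb0 : e b = 0
        · rw [if_pos hb0] at hb
          subst hb
          have ha0 : e a = 0 := by
            by_contra h0
            simp [h0] at ha
          rw [hb0, ha0] at hab
          simp at hab
        · have hlt := ZMod.val_lt (e a)
          have hbv : (e b).val = ((e a).val + 1) % n := by
            rw [hab, ← ZMod.val_natCast]; simp
          have hb1 : (e b).val ≠ 0 := by rwa [ne_eq, ZMod.val_eq_zero]
          rcases Nat.lt_or_ge ((e a).val + 1) n with hl | hg
          · rw [Nat.mod_eq_of_lt hl] at hbv
            omega
          · rw [show (e a).val + 1 = n by omega, Nat.mod_self] at hbv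
            exact absurd hbv hb1
      intro a b h
      induction h with
      | single h => exact hstep _ _ h
      | tail _ h ih => exact ih.trans (hstep _ _ h)
    exact lt_irrefl _ (hlt v v h)
  refine le_antisymm (Nat.sInf_le h2) (le_csInf ⟨2, h2⟩ ?_)
  rintro k ⟨φ, hφ⟩
  by_contra! hk
  have v₀ : V := e.symm 0
  obtain rfl : k = 1 := by
    have := (φ v₀).pos
    omega
  refine hφ (φ v₀) v₀ rfl ?_
  have hmono : ∀ a b, A a b → A a b ∧ φ a = φ v₀ ∧ φ b = φ v₀ :=
    fun a b h => ⟨h, Subsingleton.elim _ _, Subsingleton.elim _ _⟩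
  refine Relation.TransGen.head' (b := e.symm (e v₀ + 1)) (hmono _ _ ((hA _ _).2 (by simp))) ?_
  exact Relation.ReflTransGen.mono hmono _ _ (stronglyConnected_of_cycle e hA _ _)

theorem maxLocalArcConn_of_cycle {V : Type} [Fintype V] {A : V → V → Prop} {n : ℕ} [NeZero n]
    (hn : 2 ≤ n) (e : V ≃ ZMod n) (hA : ∀ v w, A v w ↔ e w = e v + 1) :
    maxLocalArcConn A = 1 := by
  have : Fact (1 < n) := ⟨hn⟩
  have hloc : ∀ u v : V, u ≠ v → localArcConn A u v = 1 := by
    intro u v huv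
    have h1 : (1 : ℕ) ∈ {n : ℕ | ∃ P : Fin n → List V, (∀ i, IsDipathList A u v (P i)) ∧
        ∀ i j, i ≠ j → ∀ p : V × V, p ∈ (P i).zip (P i).tail → p ∉ (P j).zip (P j).tail} := by
      obtain ⟨l, hl⟩ := exists_dipathList (stronglyConnected_of_cycle e hA u v)
      exact ⟨fun _ => l, fun _ => hl, fun i j hij => absurd (Subsingleton.elim i j) hij⟩
    refine le_antisymm (csSup_le ⟨1, h1⟩ ?_) (le_csSup (bddAbove_localArcConn A huv) h1)
    rintro m ⟨P, hP, hdis⟩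
    by_contra! hm
    -- two of the paths would share the only arc out of `u`
    obtain ⟨b, hub, hb⟩ := exists_first_arc huv (hP ⟨0, by omega⟩)
    obtain ⟨c, huc, hc⟩ := exists_first_arc huv (hP ⟨1, hm⟩)
    obtain rfl : b = c := e.injective (((hA _ _).1 hub).trans ((hA _ _).1 huc).symm)
    exact hdis ⟨0, by omega⟩ ⟨1, hm⟩ (by simp) _ hb hc
  have hset : {n : ℕ | ∃ u v : V, u ≠ v ∧ n = localArcConn A u v} = {1} := by
    ext m
    constructor
    · rintro ⟨u, v, huv, rfl⟩
      exact hloc u v huv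
    · rintro rfl
      have hne : e.symm 0 ≠ e.symm 1 := fun h => zero_ne_one (e.symm.injective h)
      exact ⟨_, _, hne, (hloc _ _ hne).symm⟩
  rw [maxLocalArcConn, hset, csSup_singleton]

/-- A digraph is 1-extremal if and only if it is a directed cycle. -/
theorem stmt3 {V : Type} [Fintype V] (A : V → V → Prop) (hirr : Irreflexive A) :
    IsExtremal A 1 ↔ IsDirectedCycleDigraph A := by
  refine ⟨isDirectedCycle_of_isExtremal hirr, ?_⟩
  rintro ⟨n, hn, e, hA⟩
  have : NeZero n := ⟨by omega⟩
  exact ⟨stronglyConnected_of_cycle e hA, twoConnected_of_cycle hn e hA,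
    dichrom_of_cycle hn e hA, maxLocalArcConn_of_cycle hn e hA⟩
end

section
/- Let H be a digraph such that there is a constant bounding the dichromatic number of every oriented complete multipartite graph with no induced subdigraph isomorphic to H. Then there is a constant bounding the dichromatic number of every oriented complete multipartite graph with no induced subdigraph isomorphic to C⃗3(1, H, 1). -/
def IsOriented {V : Type} (A : V → V → Prop) : Prop := ∀ u v : V, A u v → ¬ A v u

def HasInducedCopy {V W : Type} (A : V → V → Prop) (B : W → W → Prop) : Prop :=
  ∃ f : W → V, Function.Injective f ∧ ∀ a b : W, B a b ↔ A (f a) (f b)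

/-- Oriented complete multipartite graph: an oriented graph whose non-adjacency (between
distinct vertices) is given by an equivalence relation (the parts). -/
def IsCompleteMultipartite {V : Type} (A : V → V → Prop) : Prop :=
  IsOriented A ∧ ∃ r : V → V → Prop, Equivalence r ∧
    ∀ u v : V, u ≠ v → ((A u v ∨ A v u) ↔ ¬ r u v)

/-- `C⃗3(D1, D2, D3)`: disjoint union plus all arcs `D1 → D2`, `D2 → D3`, `D3 → D1`. -/
def cyc3 {W1 W2 W3 : Type} (B1 : W1 → W1 → Prop) (B2 : W2 → W2 → Prop)
    (B3 : W3 → W3 → Prop) : (W1 ⊕ W2 ⊕ W3) → (W1 ⊕ W2 ⊕ W3) → Prop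
  | Sum.inl a, Sum.inl b => B1 a b
  | Sum.inr (Sum.inl a), Sum.inr (Sum.inl b) => B2 a b
  | Sum.inr (Sum.inr a), Sum.inr (Sum.inr b) => B3 a b
  | Sum.inl _, Sum.inr (Sum.inl _) => True
  | Sum.inr (Sum.inl _), Sum.inr (Sum.inr _) => True
  | Sum.inr (Sum.inr _), Sum.inl _ => True
  | _, _ => False

/-- The subdigraph induced by `S` has no directed cycle. -/
def Acy {V : Type} (A : V → V → Prop) (S : Set V) : Prop :=
  ∀ v, ¬ Relation.TransGen (fun a b => A a b ∧ a ∈ S ∧ b ∈ S) v v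

/-- The subdigraph induced by `X` has dichromatic number at most `k`. Colours are natural numbers
below `k`, given by a function on all of `V` whose values outside `X` are irrelevant. -/
def Col {V : Type} (A : V → V → Prop) (X : Set V) (k : ℕ) : Prop :=
  ∃ φ : V → ℕ, (∀ v ∈ X, φ v < k) ∧ ∀ i, Acy A {v | v ∈ X ∧ φ v = i}

section Colouring

variable {V : Type} {A : V → V → Prop}

theorem Acy.mono {S T : Set V} (h : Acy A T) (hST : S ⊆ T) : Acy A S := fun v hv => by
  refine h v (Relation.TransGen.mono ?_ v v hv)
  exact fun a b hab => ⟨hab.1, hST hab.2.1, hST hab.2.2⟩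

theorem Acy.rev {S : Set V} (h : Acy A S) : Acy (fun a b => A b a) S := fun v hv => by
  refine h v (Relation.TransGen.mono ?_ v v (Relation.transGen_swap.mpr hv))
  exact fun a b hab => ⟨hab.1, hab.2.2, hab.2.1⟩

theorem Col.mono {X Y : Set V} {k l : ℕ} (h : Col A Y k) (hXY : X ⊆ Y) (hkl : k ≤ l) :
    Col A X l := by
  obtain ⟨φ, h1, h2⟩ := h
  exact ⟨φ, fun v hv => (h1 v (hXY hv)).trans_le hkl,
    fun i => (h2 i).mono fun v hv => ⟨hXY hv.1, hv.2⟩⟩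

theorem Col.rev {X : Set V} {k : ℕ} (h : Col A X k) : Col (fun a b => A b a) X k := by
  obtain ⟨φ, h1, h2⟩ := h
  exact ⟨φ, h1, fun i => (h2 i).rev⟩

theorem Col.union {X Y : Set V} {k l : ℕ} (hX : Col A X k) (hY : Col A Y l) :
    Col A (X ∪ Y) (k + l) := by
  classical
  obtain ⟨φ, h1, h2⟩ := hX
  obtain ⟨ψ, h3, h4⟩ := hY
  refine ⟨fun v => if v ∈ X then φ v else k + ψ v, ?_, ?_⟩
  · rintro v hv
    by_cases hx : v ∈ X
    · have := h1 v hx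
      simp only [hx, if_true]; omega
    · have := h3 v (hv.resolve_left hx)
      simp only [hx, if_false]; omega
  · intro i
    by_cases hi : i < k
    · refine (h2 i).mono ?_
      rintro v ⟨hv, hvi⟩
      by_cases hx : v ∈ X
      · simp only [hx, if_true] at hvi
        exact ⟨hx, hvi⟩
      · simp only [hx, if_false] at hvi
        omega
    · refine (h4 (i - k)).mono ?_
      rintro v ⟨hv, hvi⟩
      by_cases hx : v ∈ X
      · simp only [hx, if_true] at hvi
        have := h1 v hx
        omega
      · simp only [hx, if_false] at hvi
        exact ⟨hv.resolve_left hx, by omega⟩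

theorem Col.cover {X Y Z : Set V} {k l n : ℕ} (hY : Col A Y k) (hZ : Col A Z l)
    (hX : X ⊆ Y ∪ Z) (hn : k + l ≤ n) : Col A X n :=
  (hY.union hZ).mono hX hn

theorem Col.indep {X : Set V} (h : ∀ x ∈ X, ∀ y ∈ X, ¬ A x y) : Col A X 1 := by
  refine ⟨fun _ => 0, by simp, fun i v hv => ?_⟩
  obtain ⟨w, hw, -⟩ := Relation.TransGen.head'_iff.mp hv
  exact h _ hw.2.1.1 _ hw.2.2.1 hw.1

theorem Col.biUnion {ι : Type} (Q : Finset ι) (X : ι → Set V) {k : ℕ}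
    (h : ∀ q ∈ Q, Col A (X q) k) : Col A {v | ∃ q ∈ Q, v ∈ X q} (Q.card * k) := by
  classical
  induction Q using Finset.induction_on with
  | empty =>
    refine ⟨fun _ => 0, by simp, fun i v hv => ?_⟩
    obtain ⟨w, hw, -⟩ := Relation.TransGen.head'_iff.mp hv
    simpa using hw.2.1.1
  | insert a s ha ih =>
    refine (h a (by simp)).cover (ih fun q hq => h q (by simp [hq])) (n := _) ?_ ?_
    · rintro v ⟨q, hq, hv⟩
      rcases Finset.mem_insert.mp hq with rfl | hq
      · exact Or.inl hv
      · exact Or.inr ⟨q, hq, hv⟩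
    · rw [Finset.card_insert_of_notMem ha, Nat.succ_mul, Nat.add_comm]

/-- If `h` drops by at most one along each arc, then it cannot drop along an arc joining vertices
of equal parity, so a cycle in one parity class stays in a single level. -/
theorem Col.parity {h : V → ℕ} {E : ℕ} (harc : ∀ y x, A y x → h y ≤ h x + 1)
    (hlev : ∀ i, Col A {v | h v = i} E) (p : ℕ) : Col A {v | h v % 2 = p} E := by
  choose φ h1 h2 using hlev
  refine ⟨fun v => φ (h v) v, fun v _ => h1 _ v rfl, fun i v hv => ?_⟩
  set R := fun a b => A a b ∧ a ∈ {v | v ∈ {v | h v % 2 = p} ∧ φ (h v) v = i} ∧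
    b ∈ {v | v ∈ {v | h v % 2 = p} ∧ φ (h v) v = i} with hR
  have step : ∀ a b, R a b → h a ≤ h b := by
    rintro a b ⟨hab, ⟨ha, -⟩, ⟨hb, -⟩⟩
    have := harc a b hab
    simp only [Set.mem_ofPred_eq] at ha hb
    omega
  have up : ∀ w, Relation.TransGen R v w → h v ≤ h w := by
    intro w hw
    induction hw with
    | single h' => exact step _ _ h'
    | tail _ h' ih => exact ih.trans (step _ _ h')
  have key : ∀ w, Relation.TransGen R v w → h w ≤ h v → Relation.TransGen
      (fun a b => A a b ∧ a ∈ {u | u ∈ {u | h u = h v} ∧ φ (h v) u = i} ∧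
        b ∈ {u | u ∈ {u | h u = h v} ∧ φ (h v) u = i}) v w := by
    intro w hw
    induction hw with
    | @single b h' =>
      intro hb
      have e : h b = h v := le_antisymm hb (step _ _ h')
      obtain ⟨g1, g2, g3⟩ := h'
      exact .single ⟨g1, ⟨rfl, g2.2⟩, ⟨e, e ▸ g3.2⟩⟩
    | @tail b d hvb h' ih =>
      intro hd
      have s1 := step _ _ h'
      have s2 := up _ hvb
      have eb : h b = h v := by omega
      have ed : h d = h v := by omega
      obtain ⟨g1, g2, g3⟩ := h'
      exact .tail (ih (by omega)) ⟨g1, ⟨eb, eb ▸ g2.2⟩, ⟨ed, ed ▸ g3.2⟩⟩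
  exact h2 (h v) i v (key v hv le_rfl)

theorem Col.levels {h : V → ℕ} {E : ℕ} (harc : ∀ y x, A y x → h y ≤ h x + 1)
    (hlev : ∀ i, Col A {v | h v = i} E) : Col A Set.univ (E + E) :=
  (Col.parity harc hlev 0).cover (Col.parity harc hlev 1)
    (fun v _ => by
      rcases Nat.mod_two_eq_zero_or_one (h v) with e | e
      · exact Or.inl e
      · exact Or.inr e) le_rfl

theorem dichrom_le_of_col {k : ℕ} (h : Col A Set.univ k) : dichrom A ≤ k := by
  obtain ⟨φ, h1, h2⟩ := h
  refine Nat.sInf_le ⟨fun v => ⟨φ v, h1 v trivial⟩, fun c v _ hcyc => h2 c v ?_⟩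
  refine Relation.TransGen.mono ?_ _ _ hcyc
  rintro a b ⟨g1, g2, g3⟩
  exact ⟨g1, ⟨trivial, congrArg Fin.val g2⟩, ⟨trivial, congrArg Fin.val g3⟩⟩

/-- Finiteness guarantees that `dichrom` is attained, so that it is not the junk value of `sInf`
on the empty set; a colouring with that many colours can then be extracted. -/
theorem col_of_dichrom_le [Fintype V] (hirr : ∀ v, ¬ A v v) (X : Set V) {k : ℕ}
    (h : dichrom (fun a b : X => A a b) ≤ k) : Col A X k := by
  classical
  have hne : {k : ℕ | ∃ φ : X → Fin k, GoodColouring (fun a b : X => A a b) φ}.Nonempty := by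
    refine ⟨Fintype.card X, Fintype.equivFin X, fun c v _ hcyc => ?_⟩
    obtain ⟨w, ⟨hw, hv1, hv2⟩, -⟩ := Relation.TransGen.head'_iff.mp hcyc
    have : v = w := (Fintype.equivFin X).injective (hv1.trans hv2.symm)
    exact hirr w (this ▸ hw)
  obtain ⟨φ, hφ⟩ := Nat.sInf_mem hne
  refine Col.mono (Y := X) (k := dichrom (fun a b : X => A a b))
    ⟨fun v => if hv : v ∈ X then φ ⟨v, hv⟩ else 0, ?_, ?_⟩ le_rfl h
  · intro v hv
    simp only [hv, dif_pos]
    exact (φ ⟨v, hv⟩).2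
  · intro i v hv
    have hvX : v ∈ X ∧ (if hv : v ∈ X then (φ ⟨v, hv⟩ : ℕ) else 0) = i := by
      obtain ⟨w, hw, -⟩ := Relation.TransGen.head'_iff.mp hv
      exact hw.2.1
    have key : ∀ w, Relation.TransGen (fun a b => A a b ∧
        a ∈ {v | v ∈ X ∧ (if hv : v ∈ X then (φ ⟨v, hv⟩ : ℕ) else 0) = i} ∧
        b ∈ {v | v ∈ X ∧ (if hv : v ∈ X then (φ ⟨v, hv⟩ : ℕ) else 0) = i}) v w →
        ∃ hw : w ∈ X, Relation.TransGen (fun a b : X => A a b ∧ φ a = φ ⟨v, hvX.1⟩ ∧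
          φ b = φ ⟨v, hvX.1⟩) ⟨v, hvX.1⟩ ⟨w, hw⟩ := by
      have col : ∀ u (hu : u ∈ X), (if hv : u ∈ X then (φ ⟨u, hv⟩ : ℕ) else 0) = i →
          φ ⟨u, hu⟩ = φ ⟨v, hvX.1⟩ := by
        intro u hu hui
        have h2 := hvX.2
        simp only [hu, hvX.1, dif_pos] at hui h2
        exact Fin.ext (hui.trans h2.symm)
      intro w hw
      induction hw with
      | single h' =>
        exact ⟨h'.2.2.1, .single ⟨h'.1, rfl, col _ _ h'.2.2.2⟩⟩
      | tail _ h' ih =>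
        obtain ⟨hb, ih⟩ := ih
        exact ⟨h'.2.2.1, .tail ih ⟨h'.1, col _ _ h'.2.1.2, col _ _ h'.2.2.2⟩⟩
    obtain ⟨_, hc⟩ := key v hv
    exact hφ _ _ rfl hc

end Colouring

/-- What the argument uses about an oriented complete multipartite graph `A` with no induced
`C⃗₃(1, H, 1)`. `Cop` singles out the vertex sets of the induced copies of `H`, `c` bounds the
dichromatic number of `H`-free sets, and `m` bounds the order of `H`. All conditions are invariant
under reversing every arc. -/
structure Ctx {V : Type} (A : V → V → Prop) (Cop : Finset V → Prop) (c m : ℕ) : Prop where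
  asymm : ∀ u v, A u v → ¬ A v u
  nonadj : ∀ u v w, ¬ A u v → ¬ A v u → ¬ A v w → ¬ A w v → ¬ A u w
  nonempty : ∀ Q, Cop Q → Q.Nonempty
  card : ∀ Q, Cop Q → Q.card ≤ m
  free : ∀ X : Set V, (∀ Q : Finset V, Cop Q → ¬ (Q : Set V) ⊆ X) → Col A X c
  noC3 : ∀ Q, Cop Q → ∀ x y, (∀ q ∈ Q, A x q) → (∀ q ∈ Q, A q y) → ¬ A y x

namespace Ctx

variable {V : Type} {A : V → V → Prop} {Cop : Finset V → Prop} {c m : ℕ}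

theorem rev (C : Ctx A Cop c m) : Ctx (fun a b => A b a) Cop c m where
  asymm := fun u v => C.asymm v u
  nonadj := fun u v w h1 h2 h3 h4 => C.nonadj w v u h3 h4 h1 h2
  nonempty := C.nonempty
  card := C.card
  free := fun X hX => (C.free X hX).rev
  noC3 := fun Q hQ x y hx hy h => C.noC3 Q hQ y x hy hx h

theorem part (C : Ctx A Cop c m) (x : V) : Col A {y | ¬ A x y ∧ ¬ A y x} 1 :=
  Col.indep fun y hy z hz => C.nonadj y x z hy.2 hy.1 hz.1 hz.2

theorem arc (C : Ctx A Cop c m) {a b : V} (h : A b a) : Col A {x | A a x ∧ A x b} c :=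
  C.free _ fun Q hQ hs => C.noC3 Q hQ a b (fun _ hq => (hs hq).1) (fun _ hq => (hs hq).2) h

theorem inDiff (C : Ctx A Cop c m) {a b : V} (h : A b a) :
    Col A {x | A x b ∧ ¬ A x a} (c + 1) := by
  refine (C.arc h).cover (C.part a) ?_ le_rfl
  rintro x ⟨h1, h2⟩
  by_cases hx : A a x
  · exact Or.inl ⟨hx, h1⟩
  · exact Or.inr ⟨hx, h2⟩

theorem outDiff (C : Ctx A Cop c m) {a b : V} (h : A b a) :
    Col A {x | A a x ∧ ¬ A b x} (c + 1) :=
  (C.rev.inDiff (a := b) (b := a) h).rev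

/-! ### Sets in which all out-neighbourhoods have bounded dichromatic number -/

/-- An infinite sequence of copies of `H`, each complete to its two predecessors, never sends an
arc from an earlier copy `Q i` to a later one. By induction, some `Q` among the two predecessors of
the later copy avoids the part of the vertex `x ∈ Q i` and hence is complete to `x`, so that an arc
from `x` to a vertex `y` of the later copy would give `y → Q → x → y`. -/
theorem seq_forward (C : Ctx A Cop c m) {Q : ℕ → Finset V} (hQ : ∀ n, Cop (Q n))
    (h1 : ∀ n, ∀ y ∈ Q (n + 1), ∀ x ∈ Q n, A y x) (h2 : ∀ n, ∀ y ∈ Q (n + 2), ∀ x ∈ Q n, A y x)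
    (i : ℕ) {x : V} (hx : x ∈ Q i) (n : ℕ) :
    (∀ y ∈ Q (i + n + 1), ¬ A x y) ∧ (∀ y ∈ Q (i + n + 2), ¬ A x y) := by
  induction n with
  | zero =>
    exact ⟨fun y hy => C.asymm _ _ (h1 i y hy x hx), fun y hy => C.asymm _ _ (h2 i y hy x hx)⟩
  | succ n ih =>
    refine ⟨ih.2, fun y hy hxy => ?_⟩
    have hy : y ∈ Q (i + n + 1 + 2) := hy
    have e1 : ∃ z ∈ Q (i + n + 1), ¬ A z x := by
      by_contra hcon
      push Not at hcon
      exact C.noC3 _ (hQ (i + n + 1)) y x (fun q hq => h2 _ y hy q hq) hcon hxy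
    have e2 : ∃ z ∈ Q (i + n + 2), ¬ A z x := by
      by_contra hcon
      push Not at hcon
      exact C.noC3 _ (hQ (i + n + 2)) y x (fun q hq => h1 (i + n + 2) y hy q hq) hcon hxy
    obtain ⟨z, hz, hzx⟩ := e1
    obtain ⟨w, hw, hwx⟩ := e2
    exact C.nonadj w x z hwx (ih.2 w hw) (ih.1 z hz) hzx (h1 (i + n + 1) w hw z hz)

/-- The bound on the dichromatic number of a set in which all out-neighbourhoods have dichromatic
number at most `k`; see `Ctx.col_of_out`. -/
def bd (c m k : ℕ) : ℕ := 2 * (m * (k + 1)) + c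

/-- If all out-neighbourhoods within `X` have small dichromatic number, then all but a small part
of `X` is complete to any two given copies of `H`. If `X` had large dichromatic number, this would
yield an infinite sequence as in `Ctx.seq_forward`, which would repeat itself by finiteness. -/
theorem col_of_out [Fintype V] (C : Ctx A Cop c m) {X : Set V} {k : ℕ}
    (h : ∀ v ∈ X, Col A {x | A v x ∧ x ∈ X} k) : Col A X (bd c m k) := by
  classical
  by_contra hX
  have near : ∀ Q, Cop Q → (Q : Set V) ⊆ X →
      Col A {v | ∃ q ∈ Q, v ∈ {x | x ∈ X ∧ ¬ A x q}} (m * (k + 1)) := by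
    intro Q hQ hs
    refine (Col.biUnion Q (fun q => {x | x ∈ X ∧ ¬ A x q}) (k := k + 1) fun q hq => ?_).mono
      le_rfl (Nat.mul_le_mul_right _ (C.card Q hQ))
    refine (h q (hs hq)).cover (C.part q) ?_ le_rfl
    rintro x ⟨hx, hxq⟩
    by_cases hqx : A q x
    · exact Or.inl ⟨hqx, hx⟩
    · exact Or.inr ⟨hqx, hxq⟩
  let S := {Q : Finset V // Cop Q ∧ (Q : Set V) ⊆ X}
  have next : ∀ Q R : S, ∃ T : S, ∀ y ∈ T.1, (∀ x ∈ Q.1, A y x) ∧ (∀ x ∈ R.1, A y x) := by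
    intro Q R
    by_contra hcon
    push Not at hcon
    apply hX
    have hf : Col A {v | v ∈ X ∧ (∀ x ∈ Q.1, A v x) ∧ (∀ x ∈ R.1, A v x)} c := by
      refine C.free _ fun T hT hs => ?_
      obtain ⟨y, hy, h'⟩ := hcon ⟨T, hT, fun v hv => (hs hv).1⟩
      obtain ⟨x, hx, hn⟩ := h' (hs hy).2.1
      exact hn ((hs hy).2.2 x hx)
    refine ((near Q.1 Q.2.1 Q.2.2).union (near R.1 R.2.1 R.2.2)).cover hf ?_
      (by unfold bd; omega)
    intro v hv
    by_cases a1 : ∀ x ∈ Q.1, A v x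
    · by_cases a2 : ∀ x ∈ R.1, A v x
      · exact Or.inr ⟨hv, a1, a2⟩
      · push Not at a2
        obtain ⟨x, hx, hn⟩ := a2
        exact Or.inl (Or.inr ⟨x, hx, hv, hn⟩)
    · push Not at a1
      obtain ⟨x, hx, hn⟩ := a1
      exact Or.inl (Or.inl ⟨x, hx, hv, hn⟩)
  obtain ⟨Q0⟩ : Nonempty S := by
    by_contra hcon
    refine hX ((C.free X fun Q hQ hs => hcon ⟨⟨Q, hQ, hs⟩⟩).mono le_rfl ?_)
    unfold bd; omega
  choose F hF using next
  let s : ℕ → S × S := fun n => Nat.rec (Q0, F Q0 Q0) (fun _ p => (p.2, F p.1 p.2)) n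
  have hs1 : ∀ n, ∀ y ∈ (s n).2.1, ∀ x ∈ (s n).1.1, A y x := by
    intro n y hy x hx
    cases n with
    | zero => exact (hF Q0 Q0 y hy).1 x hx
    | succ n => exact (hF (s n).1 (s n).2 y hy).2 x hx
  have hs2 : ∀ n, ∀ y ∈ (s (n + 1)).2.1, ∀ x ∈ (s n).1.1, A y x :=
    fun n y hy x hx => (hF (s n).1 (s n).2 y hy).1 x hx
  let Q : ℕ → Finset V := fun n => (s n).1.1
  have hQ1 : ∀ n, ∀ y ∈ Q (n + 1), ∀ x ∈ Q n, A y x := hs1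
  have hQ2 : ∀ n, ∀ y ∈ Q (n + 2), ∀ x ∈ Q n, A y x := hs2
  have hQ : ∀ n, Cop (Q n) := fun n => (s n).1.2.1
  -- Even indices make the two equal members of the sequence at least two steps apart.
  obtain ⟨i, j, hij, he⟩ : ∃ i j, i < j ∧ Q (2 * i) = Q (2 * j) := by
    obtain ⟨i, j, hne, he⟩ := Finite.exists_ne_map_eq_of_infinite fun n : ℕ => Q (2 * n)
    rcases lt_or_gt_of_ne hne with hl | hl
    · exact ⟨i, j, hl, he⟩
    · exact ⟨j, i, hl, he.symm⟩
  obtain ⟨n, hn⟩ : ∃ n, 2 * j = 2 * i + n + 1 + 1 := ⟨2 * j - 2 * i - 2, by omega⟩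
  obtain ⟨x, hx⟩ := C.nonempty _ (hQ (2 * i))
  obtain ⟨y, hy⟩ := C.nonempty _ (hQ (2 * i + n + 1))
  refine (C.seq_forward hQ hQ1 hQ2 (2 * i) hx n).1 y hy (hQ1 (2 * i + n + 1) x ?_ y hy)
  rw [← hn, ← he]
  exact hx

theorem exists_both [Fintype V] (C : Ctx A Cop c m) {X : Set V} {k l : ℕ}
    (h : ¬ Col A X (bd c m k + bd c m l)) :
    ∃ v ∈ X, ¬ Col A {x | A v x ∧ x ∈ X} k ∧ ¬ Col A {x | A x v ∧ x ∈ X} l := by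
  by_contra hcon
  push Not at hcon
  apply h
  have h1 : Col A {v | v ∈ X ∧ Col A {x | A v x ∧ x ∈ X} k} (bd c m k) :=
    C.col_of_out fun v hv => hv.2.mono (fun x hx => ⟨hx.1, hx.2.1⟩) le_rfl
  have h2 : Col A {v | v ∈ X ∧ Col A {x | A x v ∧ x ∈ X} l} (bd c m l) :=
    (C.rev.col_of_out fun v hv => (hv.2.mono (fun x hx => ⟨hx.1, hx.2.1⟩) le_rfl).rev).rev
  refine h1.cover h2 ?_ le_rfl
  intro v hv
  by_cases hk : Col A {x | A v x ∧ x ∈ X} k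
  · exact Or.inl ⟨hv, hk⟩
  · exact Or.inr ⟨hv, hcon v hv hk⟩

end Ctx

/-! ### Chains of vertices and the level function -/

/-- `x` lies far before `y`: the set of `z` with `x → z → y` has dichromatic number more than `T`. -/
def Far {V : Type} (A : V → V → Prop) (T : ℕ) (x y : V) : Prop :=
  ¬ Col A {z | A x z ∧ A z y} T

/-- `x` is the last vertex of a chain of `n + 1` vertices, consecutive ones being in relation
`Far` with parameter `3c + 3`. -/
def Chn {V : Type} (A : V → V → Prop) (c : ℕ) : ℕ → V → Prop
  | 0, _ => True
  | n + 1, x => ∃ w, Chn A c n w ∧ Far A (3 * c + 3) w x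

/-- Some chain of `n` vertices ends far before `y`. The last step only has to meet the weaker
parameter `3c + 2`; this slack absorbs the one part that is lost whenever a chain is rerouted. -/
def Rch {V : Type} (A : V → V → Prop) (c : ℕ) : ℕ → V → Prop
  | 0, _ => True
  | n + 1, y => ∃ x, Chn A c n x ∧ Far A (3 * c + 2) x y

namespace Ctx

variable {V : Type} {A : V → V → Prop} {Cop : Finset V → Prop} {c m : ℕ}

theorem no_arc (C : Ctx A Cop c m) {x y : V} {T : ℕ} (h : Far A T x y) (hT : c ≤ T) : ¬ A y x :=
  fun hyx => h ((C.arc hyx).mono le_rfl hT)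

theorem far_mono {T T' : ℕ} (hT : T' ≤ T) {x y : V} (h : Far A T x y) : Far A T' x y :=
  fun hc => h (hc.mono le_rfl hT)

theorem far_push (C : Ctx A Cop c m) {w u y x : V} (h1 : Far A (3 * c + 3) w u)
    (h2 : Far A (3 * c + 2) u y) (h : A y x) : Far A (3 * c + 2) w x := by
  -- Every `b` with `w → b → u` is itself far before `x`, so it lies in `N⁻(x)` or in the part of `x`.
  have key : ∀ b, A b u → ¬ A x b := by
    intro b hb
    refine C.no_arc (T := c) (fun hc => h2 ?_) le_rfl
    refine hc.cover ((C.outDiff hb).union (C.inDiff h)) (n := _) ?_ (by omega)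
    rintro z ⟨hz1, hz2⟩
    by_cases a1 : A b z
    · by_cases a2 : A z x
      · exact Or.inl ⟨a1, a2⟩
      · exact Or.inr (Or.inr ⟨hz2, a2⟩)
    · exact Or.inr (Or.inl ⟨hz1, a1⟩)
  intro hc
  refine h1 (hc.cover (C.part x) ?_ (by omega))
  rintro b ⟨hb1, hb2⟩
  by_cases a : A b x
  · exact Or.inl ⟨hb1, a⟩
  · exact Or.inr ⟨key b hb2, a⟩

theorem far_trans (C : Ctx A Cop c m) {x z u : V} (h1 : Far A (3 * c + 2) x z)
    (h2 : Far A (3 * c + 3) z u) : Far A (3 * c + 2) x u := by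
  have key : ∀ b, A z b → ¬ A b x := by
    intro b hb
    refine C.no_arc (T := c) (fun hc => h1 ?_) le_rfl
    refine hc.cover (C.inDiff hb) ?_ (by omega)
    rintro y ⟨hy1, hy2⟩
    by_cases a : A y b
    · exact Or.inl ⟨hy1, a⟩
    · exact Or.inr ⟨hy2, a⟩
  intro hc
  refine h2 (hc.cover (C.part x) ?_ (by omega))
  rintro b ⟨hb1, hb2⟩
  by_cases a : A x b
  · exact Or.inl ⟨a, hb2⟩
  · exact Or.inr ⟨a, key b hb1⟩

theorem far_irrefl (C : Ctx A Cop c m) (x : V) {T : ℕ} (hT : 1 ≤ T) : ¬ Far A T x x := by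
  intro h
  refine h (Col.mono (Col.indep ?_) le_rfl hT)
  exact fun y hy => absurd hy.2 (C.asymm _ _ hy.1)

open Classical in
/-- Along a chain the set of vertices far before the current one grows strictly, by
`Ctx.far_trans` and `Ctx.far_irrefl`; hence chains are bounded in length. -/
theorem chn_card [Fintype V] (C : Ctx A Cop c m) {n : ℕ} {x : V} (h : Chn A c n x) :
    n ≤ (Finset.univ.filter fun w => Far A (3 * c + 2) w x).card := by
  induction n generalizing x with
  | zero => exact Nat.zero_le _
  | succ n ih =>
    obtain ⟨w, hw, hwx⟩ := h
    refine Nat.succ_le_of_lt ((ih hw).trans_lt (Finset.card_lt_card ?_))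
    rw [Finset.ssubset_iff_of_subset]
    · refine ⟨w, ?_, ?_⟩
      · simpa using far_mono (by omega) hwx
      · simpa using C.far_irrefl w (by omega)
    · intro v hv
      simp only [Finset.mem_filter, Finset.mem_univ, true_and] at hv ⊢
      exact C.far_trans hv hwx

theorem rch_le [Fintype V] (C : Ctx A Cop c m) {n : ℕ} {y : V} (h : Rch A c n y) :
    n ≤ Fintype.card V + 1 := by
  classical
  cases n with
  | zero => exact Nat.zero_le _
  | succ n =>
    obtain ⟨x, hx, -⟩ := h
    exact Nat.succ_le_succ ((C.chn_card hx).trans (Finset.card_le_univ _))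

theorem rch_arc (C : Ctx A Cop c m) {n : ℕ} {y x : V} (h : Rch A c (n + 1) y) (hyx : A y x) :
    Rch A c n x := by
  cases n with
  | zero => trivial
  | succ n =>
    obtain ⟨u, ⟨w, hw, hwu⟩, huy⟩ := h
    exact ⟨w, hw, C.far_push hwu huy hyx⟩

/-- A set whose dichromatic number exceeds `ext c m k` contains a vertex whose out- and
in-neighbourhoods in the set have dichromatic number more than `k` and more than `3c + 3`. -/
def ext (c m k : ℕ) : ℕ := bd c m k + bd c m (3 * c + 3)

/-- The bound on the dichromatic number of a single level. -/
def lev (c m : ℕ) : ℕ := ext c m (ext c m (ext c m (ext c m 0)) + 1)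

/-- A large set `D` contains a vertex `d` far before some `e` that is itself far before some vertex
`f` of `D`. As `d` has a large in-neighbourhood in `D`, every vertex dominating `D` is far before
`d`, so a chain ending at such a vertex extends by `d` and `e`. -/
theorem extend [Fintype V] (C : Ctx A Cop c m) {D : Set V}
    (hD : ¬ Col A D (ext c m (ext c m (ext c m 0)))) :
    ∃ d ∈ D, ¬ Col A {z | A z d ∧ z ∈ D} (3 * c + 3) ∧
      ∃ e, Far A (3 * c + 3) d e ∧ ∃ f ∈ D, Far A (3 * c + 2) e f := by
  obtain ⟨d, hd, ho, hi⟩ := C.exists_both hD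
  obtain ⟨e, he, heo, hei⟩ := C.exists_both ho
  obtain ⟨f, hf, -, hfi⟩ := C.exists_both heo
  refine ⟨d, hd, hi, e, fun hc => hei (hc.mono ?_ le_rfl), f, hf.2.2,
    fun hc => hfi (hc.mono ?_ (by omega))⟩
  · exact fun z hz => ⟨hz.2.1, hz.1⟩
  · exact fun z hz => ⟨hz.2.1, hz.1⟩

/-- In a level of large dichromatic number take `x` with a large out-neighbourhood `D` in the
level. A chain `…, w, u` of length `t` ending far before `x` can be rerouted through `D`:
dropping `u`, the vertex `w` dominates `D` up to its own part, and `Ctx.extend` adds two vertices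
of `D`, which reaches a vertex of the level by a chain of length `t + 1`. -/
theorem level [Fintype V] (C : Ctx A Cop c m) {L : Set V} {t : ℕ}
    (h1 : ∀ x ∈ L, Rch A c t x) (h2 : ∀ x ∈ L, ∀ n, t < n → ¬ Rch A c n x) :
    Col A L (lev c m) := by
  by_contra hL
  obtain ⟨x, hxL, ho, -⟩ := C.exists_both hL
  have ho' : ¬ Col A {z | A x z ∧ z ∈ L} (ext c m (ext c m (ext c m 0))) :=
    fun hc => ho (hc.mono le_rfl (by omega))
  obtain ⟨d, hd, -, e, hde, f, hf, hef⟩ := C.extend ho'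
  have hr : Rch A c 2 f := ⟨e, ⟨d, trivial, hde⟩, hef⟩
  match t, h1 x hxL, h2 with
  | 0, _, h2 => exact h2 f hf.2 2 (by omega) hr
  | 1, _, h2 => exact h2 f hf.2 2 (by omega) hr
  | t + 2, ⟨u, ⟨w, hw, hwu⟩, hux⟩, h2 =>
    have hD : ¬ Col A {z | A w z ∧ A x z ∧ z ∈ L} (ext c m (ext c m (ext c m 0))) := by
      refine fun hc => ho (hc.cover (C.part w) ?_ le_rfl)
      intro z hz
      by_cases a : A w z
      · exact Or.inl ⟨a, hz⟩
      · exact Or.inr ⟨a, C.no_arc (C.far_push hwu hux hz.1) (by omega)⟩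
    obtain ⟨d, hd, hdi, e, hde, f, hf, hef⟩ := C.extend hD
    refine h2 f hf.2.2 (t + 3) (by omega) ⟨e, ⟨d, ⟨w, hw, fun hc => hdi ?_⟩, hde⟩, hef⟩
    exact hc.mono (fun z hz => ⟨hz.2.1, hz.1⟩) le_rfl

theorem main [Fintype V] (C : Ctx A Cop c m) : Col A Set.univ (lev c m + lev c m) := by
  classical
  have spec : ∀ v, Rch A c (Nat.findGreatest (fun n => Rch A c n v) (Fintype.card V + 1)) v :=
    fun v => Nat.findGreatest_spec (P := fun n => Rch A c n v) (m := 0) (Nat.zero_le _) trivial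
  have greatest : ∀ v n, Rch A c n v →
      n ≤ Nat.findGreatest (fun n => Rch A c n v) (Fintype.card V + 1) :=
    fun v n hn => Nat.le_findGreatest (C.rch_le hn) hn
  generalize hh : (fun v => Nat.findGreatest (fun n => Rch A c n v) (Fintype.card V + 1)) = h
    at spec greatest
  have hv : ∀ v, Nat.findGreatest (fun n => Rch A c n v) (Fintype.card V + 1) = h v :=
    fun v => congrFun hh v
  simp only [hv] at spec greatest
  refine Col.levels (h := h) ?_ ?_
  · intro y x hyx
    have hy := spec y
    generalize h y = n at hy
    cases n with
    | zero => exact Nat.zero_le _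
    | succ n => exact Nat.succ_le_succ (greatest x n (C.rch_arc hy hyx))
  · intro i
    refine C.level (t := i) ?_ ?_
    · rintro x rfl
      exact spec x
    · rintro x rfl n hn hr
      exact absurd (greatest x n hr) (by omega)

end Ctx

/-! ### Specialisation to copies of `H` -/

open Classical in
theorem ctx_of_free {W : Type} [Fintype W] [Nonempty W] {H : W → W → Prop} {c : ℕ}
    (h : ∀ (V : Type) [Fintype V] (A : V → V → Prop),
      IsCompleteMultipartite A → ¬ HasInducedCopy A H → dichrom A ≤ c)
    {V : Type} [Fintype V] {A : V → V → Prop} (hA : IsCompleteMultipartite A)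
    (hf : ¬ HasInducedCopy A (cyc3 (fun _ _ : Unit => False) H (fun _ _ : Unit => False))) :
    Ctx A (fun Q => ∃ f : W → V, Function.Injective f ∧ (∀ a b, H a b ↔ A (f a) (f b)) ∧
      Q = Finset.univ.image f) c (Fintype.card W) := by
  obtain ⟨hor, r, hr, hadj⟩ := hA
  have hirr : ∀ v, ¬ A v v := fun v hv => hor v v hv hv
  have hnon : ∀ u v, ¬ A u v → ¬ A v u → r u v := by
    intro u v h1 h2
    by_cases e : u = v
    · exact e ▸ hr.refl u
    · by_contra hn
      exact ((hadj u v e).mpr hn).elim h1 h2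
  refine ⟨hor, ?_, ?_, ?_, ?_, ?_⟩
  · intro u v w h1 h2 h3 h4 huw
    have hne : u ≠ w := fun e => hirr u (by rw [← e] at huw; exact huw)
    exact (hadj u w hne).mp (Or.inl huw) (hr.trans (hnon u v h1 h2) (hnon v w h3 h4))
  · rintro Q ⟨f, -, -, rfl⟩
    exact Finset.univ_nonempty.image f
  · rintro Q ⟨f, -, -, rfl⟩
    exact Finset.card_image_le
  · intro X hX
    refine col_of_dichrom_le hirr X (h X (fun a b => A a b) ?_ ?_)
    · refine ⟨fun u v => hor u v, fun u v => r u v, ⟨fun u => hr.refl u, hr.symm, hr.trans⟩, ?_⟩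
      exact fun u v huv => hadj u v fun e => huv (Subtype.ext e)
    · rintro ⟨f, hf1, hf2⟩
      refine hX _ ⟨fun a => f a, Subtype.val_injective.comp hf1, hf2, rfl⟩ ?_
      intro v hv
      simp only [Finset.coe_image, Finset.coe_univ, Set.image_univ, Set.mem_range] at hv
      obtain ⟨a, rfl⟩ := hv
      exact (f a).2
  · rintro Q ⟨f, hf1, hf2, rfl⟩ x y hx hy hyx
    have hx : ∀ a, A x (f a) := fun a => hx _ (Finset.mem_image_of_mem f (Finset.mem_univ a))
    have hy : ∀ a, A (f a) y := fun a => hy _ (Finset.mem_image_of_mem f (Finset.mem_univ a))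
    have hxf : ∀ a, x ≠ f a := fun a e => hirr (f a) (e ▸ hx a)
    have hyf : ∀ a, y ≠ f a := fun a e => hirr (f a) (by have := hy a; rwa [e] at this)
    have hxy : x ≠ y := fun e => hirr y (e ▸ hyx)
    refine hf ⟨Sum.elim (fun _ => x) (Sum.elim f fun _ => y), ?_, ?_⟩
    · rintro (a | a | a) (b | b | b) hab <;>
        simp only [Sum.elim_inl, Sum.elim_inr] at hab
      · rfl
      · exact absurd hab (hxf b)
      · exact absurd hab hxy
      · exact absurd hab.symm (hxf a)
      · rw [hf1 hab]
      · exact absurd hab.symm (hyf a)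
      · exact absurd hab.symm hxy
      · exact absurd hab (hyf b)
      · rfl
    · rintro (a | a | a) (b | b | b) <;>
        simp only [Sum.elim_inl, Sum.elim_inr, cyc3, true_iff, false_iff]
      · exact hirr x
      · exact hx b
      · exact hor _ _ hyx
      · exact hor _ _ (hx a)
      · exact hf2 a b
      · exact hy a
      · exact hyx
      · exact hor _ _ (hy b)
      · exact hirr y

theorem stmt6 {W : Type} [Fintype W] (H : W → W → Prop)
    (h : ∃ c : ℕ, ∀ (V : Type) [Fintype V] (A : V → V → Prop),
      IsCompleteMultipartite A → ¬ HasInducedCopy A H → dichrom A ≤ c) :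
    ∃ c : ℕ, ∀ (V : Type) [Fintype V] (A : V → V → Prop),
      IsCompleteMultipartite A →
      ¬ HasInducedCopy A (cyc3 (fun _ _ : Unit => False) H (fun _ _ : Unit => False)) →
      dichrom A ≤ c := by
  obtain ⟨c, hc⟩ := h
  cases isEmpty_or_nonempty W with
  | inr hW =>
    exact ⟨_, fun V _ A hA hf => dichrom_le_of_col (ctx_of_free hc hA hf).main⟩
  | inl hW =>
    -- If `H` has no vertex, then `C⃗₃(1, H, 1)` is a single arc.
    refine ⟨1, fun V _ A hA hf => dichrom_le_of_col (Col.indep fun y _ x _ hyx => hf ?_)⟩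
    have hor := hA.1
    have hirr : ∀ v, ¬ A v v := fun v hv => hor v v hv hv
    have hxy : x ≠ y := fun e => hirr y (e ▸ hyx)
    refine ⟨Sum.elim (fun _ => x) (Sum.elim isEmptyElim fun _ => y), ?_, ?_⟩
    · rintro (a | a | a) (b | b | b) hab <;>
        first
        | rfl
        | exact isEmptyElim a
        | exact isEmptyElim b
        | exact absurd hab hxy
        | exact absurd hab.symm hxy
    · rintro (a | a | a) (b | b | b) <;>
        first
        | exact isEmptyElim a
        | exact isEmptyElim b
        | simp only [Sum.elim_inl, Sum.elim_inr, cyc3, true_iff, false_iff]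
      · exact hirr x
      · exact hor _ _ hyx
      · exact hyx
      · exact hirr y
end
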